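/- For any connected graphs G and H, pd(G⊙H) ≥ pd(H). -/

import Mathlib

/-!
Fix a vertex `i` of `G`. The traces on the `i`-th copy of `H` of the cells of a resolving partition
of `G ⊙ H` form a partition of `H` with at most as many cells, and this partition resolves `H`.
Indeed, suppose `u` and `v` have equal distances in `H` to every nonempty trace, and let `A` be a
cell with a point `y` nearest to `v`. If `y` lies outside the copy, every path from the copy to `y`
runs through the vertex `i`, so `y` is equally far from `u` (`dist_outside_le`). If `y` lies in the
copy, at distance at most one from `v`, then `u` is within the same distance of the trace of `A`;
and otherwise `y` is at distance two from `v` and at most two from `u`. So `u` is no farther from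
`A` than `v` is (`setDist_corona_le`), and by symmetry `u` and `v` have the same representation in
`G ⊙ H`, whence `u = v`.

Since `G ⊙ H` is connected, the partition into singletons is resolving, so `pd(G ⊙ H)` is attained
and is not the junk value `sInf ∅ = 0`.
-/

open SimpleGraph

/-- The corona product `G ⊙ H`: one copy of `G`, one copy of `H` for each vertex of `G`,
with the `i`-th vertex of `G` joined to every vertex of the `i`-th copy of `H`. -/
def corona {α β : Type*} (G : SimpleGraph α) (H : SimpleGraph β) :
    SimpleGraph (α ⊕ α × β) :=
  SimpleGraph.fromRel (fun x y =>
    match x, y with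
    | Sum.inl a, Sum.inl b => G.Adj a b
    | Sum.inl a, Sum.inr iu => a = iu.1
    | Sum.inr iu, Sum.inr jw => iu.1 = jw.1 ∧ H.Adj iu.2 jw.2
    | _, _ => False)

/-- The distance from a vertex to a set of vertices: `d(v,A) = min_{u ∈ A} d(v,u)`. -/
noncomputable def setDist {α : Type*} (G : SimpleGraph α) (v : α) (A : Set α) : ℕ :=
  sInf (G.dist v '' A)

/-- `S` is a resolving set for `G`: distinct vertices have distinct metric representations. -/
def IsResolvingSet {α : Type*} (G : SimpleGraph α) (S : Set α) : Prop :=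
  ∀ u v : α, (∀ w ∈ S, G.dist u w = G.dist v w) → u = v

/-- The metric dimension of `G`: minimum cardinality of a resolving set. -/
noncomputable def metricDim {α : Type*} (G : SimpleGraph α) : ℕ :=
  sInf {k | ∃ S : Set α, IsResolvingSet G S ∧ S.ncard = k}

/-- A family of sets is a resolving partition for `G` if it is a partition of the vertex set
into nonempty cells and distinct vertices have distinct partition representations. -/
def IsResolvingPartition {α : Type*} (G : SimpleGraph α) (P : Set (Set α)) : Prop :=
  (∀ A ∈ P, A.Nonempty) ∧ (∀ v : α, ∃! A : Set α, A ∈ P ∧ v ∈ A) ∧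
    ∀ u v : α, (∀ A ∈ P, setDist G u A = setDist G v A) → u = v

/-- The partition dimension of `G`: minimum number of cells in a resolving partition. -/
noncomputable def partitionDim {α : Type*} (G : SimpleGraph α) : ℕ :=
  sInf {t | ∃ P : Set (Set α), IsResolvingPartition G P ∧ P.ncard = t}

/-- `c(H)`: the maximum cardinality of a connected component of `H` which is isomorphic to a
complete graph (i.e. whose vertex set is a clique). -/
noncomputable def maxCompleteComp {β : Type*} (H : SimpleGraph β) : ℕ :=
  sSup {k | ∃ C : H.ConnectedComponent, H.IsClique C.supp ∧ C.supp.ncard = k}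

/-- `β(H)`: the number of isolated vertices of `H`. -/
noncomputable def numIsolated {β : Type*} (H : SimpleGraph β) : ℕ :=
  Set.ncard {v : β | ∀ u, ¬ H.Adj v u}

/-- `α(H)`: the number of connected components of `H` of order greater than one. -/
noncomputable def numBigComp {β : Type*} (H : SimpleGraph β) : ℕ :=
  Set.ncard {C : H.ConnectedComponent | 1 < C.supp.ncard}

section Corona

variable {V W : Type*} {G : SimpleGraph V} {H : SimpleGraph W}

lemma corona_adj_inl_inr (a : V) (w : W) : (corona G H).Adj (Sum.inl a) (Sum.inr (a, w)) := by
  simp [corona]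

lemma corona_adj_inl_inl {a b : V} (h : G.Adj a b) :
    (corona G H).Adj (Sum.inl a) (Sum.inl b) := by
  simp [corona, h, h.ne]

lemma corona_adj_inr_inr {a : V} {u w : W} :
    (corona G H).Adj (Sum.inr (a, u)) (Sum.inr (a, w)) ↔ H.Adj u w := by
  simp only [corona, SimpleGraph.fromRel_adj]
  constructor
  · rintro ⟨-, h | h⟩
    exacts [h.2, h.2.symm]
  · intro h
    exact ⟨by simp [h.ne], Or.inl ⟨trivial, h⟩⟩

lemma corona_adj_inr {a : V} {u : W} {y : V ⊕ V × W}
    (h : (corona G H).Adj (Sum.inr (a, u)) y) : y = Sum.inl a ∨ ∃ w, y = Sum.inr (a, w) := by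
  rcases y with b | ⟨b, w⟩
  · simp [corona] at h
    simp [h]
  · simp only [corona, SimpleGraph.fromRel_adj] at h
    rcases h with ⟨-, h | h⟩
    · simp [h.1]
    · simp [h.1]

lemma corona_connected (hG : G.Connected) : (corona G H).Connected := by
  let f : G →g corona G H := ⟨Sum.inl, fun h => corona_adj_inl_inl h⟩
  have hl : ∀ a b : V, (corona G H).Reachable (Sum.inl a) (Sum.inl b) := fun a b =>
    (hG.preconnected a b).map f
  obtain ⟨i⟩ := hG.nonempty
  refine (SimpleGraph.connected_iff_exists_forall_reachable _).2 ⟨Sum.inl i, ?_⟩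
  rintro (b | ⟨b, w⟩)
  · exact hl i b
  · exact (hl i b).trans (corona_adj_inl_inr b w).reachable

/-- The vertex `i` of `G` separates the `i`-th copy of `H` from everything else, so a walk leaving
the copy spends at least one step before continuing from `i`. -/
lemma walk_outside {i : V} {x y : V ⊕ V × W} (p : (corona G H).Walk x y) :
    (∃ v, x = Sum.inr (i, v)) → (∀ w, y ≠ Sum.inr (i, w)) →
      1 + (corona G H).dist (Sum.inl i) y ≤ p.length := by
  induction p with
  | nil =>
    rintro ⟨v, rfl⟩ hy
    exact absurd rfl (hy v)
  | cons h q ih =>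
    rintro ⟨v, rfl⟩ hy
    rw [SimpleGraph.Walk.length_cons]
    rcases corona_adj_inr h with rfl | hx
    · have := SimpleGraph.dist_le q
      omega
    · have := ih hx hy
      omega

lemma dist_outside_le (hG : G.Connected) {i : V} (u v : W) {y : V ⊕ V × W}
    (hy : ∀ w, y ≠ Sum.inr (i, w)) :
    (corona G H).dist (Sum.inr (i, u)) y ≤ (corona G H).dist (Sum.inr (i, v)) y := by
  have hC := corona_connected (H := H) hG
  obtain ⟨p, hp⟩ := hC.exists_walk_length_eq_dist (Sum.inr (i, v)) y
  have h1 := walk_outside p ⟨v, rfl⟩ hy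
  have h2 := hC.dist_triangle (u := Sum.inr (i, u)) (v := Sum.inl i) (w := y)
  have h3 := SimpleGraph.dist_eq_one_iff_adj.2 (corona_adj_inl_inr (G := G) (H := H) i u).symm
  omega

lemma dist_copy_le_two (hG : G.Connected) (i : V) (u w : W) :
    (corona G H).dist (Sum.inr (i, u)) (Sum.inr (i, w)) ≤ 2 := by
  have h2 := (corona_connected (H := H) hG).dist_triangle
    (u := Sum.inr (i, u)) (v := Sum.inl i) (w := Sum.inr (i, w))
  have h3 := SimpleGraph.dist_eq_one_iff_adj.2 (corona_adj_inl_inr (G := G) (H := H) i u).symm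
  have h4 := SimpleGraph.dist_eq_one_iff_adj.2 (corona_adj_inl_inr (G := G) (H := H) i w)
  omega

lemma setDist_le {α : Type*} (K : SimpleGraph α) {v y : α} {A : Set α} (hy : y ∈ A) :
    setDist K v A ≤ K.dist v y :=
  Nat.sInf_le ⟨y, hy, rfl⟩

lemma exists_setDist_eq {α : Type*} (K : SimpleGraph α) (v : α) {A : Set α} (hA : A.Nonempty) :
    ∃ y ∈ A, K.dist v y = setDist K v A :=
  Nat.sInf_mem (hA.image (K.dist v))

lemma mem_iff_setDist_eq_zero {α : Type*} {K : SimpleGraph α} (hK : K.Connected) {v : α}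
    {A : Set α} (hA : A.Nonempty) : v ∈ A ↔ setDist K v A = 0 := by
  constructor
  · intro h
    have := setDist_le K (v := v) h
    rwa [SimpleGraph.dist_self, Nat.le_zero] at this
  · intro h
    obtain ⟨y, hy, hd⟩ := exists_setDist_eq K v hA
    rw [h, hK.dist_eq_zero_iff] at hd
    exact hd ▸ hy

/-- The trace of a set of vertices of the corona on the `i`-th copy of `H`. -/
def copyTrace (i : V) (A : Set (V ⊕ V × W)) : Set W := {w | Sum.inr (i, w) ∈ A}

lemma setDist_corona_le (hG : G.Connected) (hH : H.Connected) {i : V} {u v : W}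
    {A : Set (V ⊕ V × W)} (hA : A.Nonempty)
    (h : (copyTrace i A).Nonempty → setDist H u (copyTrace i A) = setDist H v (copyTrace i A)) :
    setDist (corona G H) (Sum.inr (i, u)) A ≤ setDist (corona G H) (Sum.inr (i, v)) A := by
  have hC := corona_connected (H := H) hG
  obtain ⟨y, hy, hd⟩ := exists_setDist_eq (corona G H) (Sum.inr (i, v)) hA
  rw [← hd]
  by_cases hout : ∀ w, y ≠ Sum.inr (i, w)
  · exact (setDist_le _ hy).trans (dist_outside_le hG u v hout)
  push Not at hout
  obtain ⟨w, rfl⟩ := hout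
  have hw : w ∈ copyTrace i A := hy
  have hne : (copyTrace i A).Nonempty := ⟨w, hw⟩
  have huv := h hne
  obtain h0 | h1 | h2 : (corona G H).dist (Sum.inr (i, v)) (Sum.inr (i, w)) = 0 ∨
      (corona G H).dist (Sum.inr (i, v)) (Sum.inr (i, w)) = 1 ∨
      2 ≤ (corona G H).dist (Sum.inr (i, v)) (Sum.inr (i, w)) := by omega
  · rw [hC.dist_eq_zero_iff] at h0
    have hvw : v = w := by simpa using h0
    subst hvw
    rw [(mem_iff_setDist_eq_zero hH hne).1 hw, ← mem_iff_setDist_eq_zero hH hne] at huv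
    have hu : Sum.inr (i, u) ∈ A := huv
    exact ((mem_iff_setDist_eq_zero hC hA).1 hu).le.trans (Nat.zero_le _)
  · rw [h1]
    rw [SimpleGraph.dist_eq_one_iff_adj, corona_adj_inr_inr] at h1
    have hv1 := setDist_le H (v := v) hw
    rw [SimpleGraph.dist_eq_one_iff_adj.2 h1] at hv1
    obtain ⟨w', hw', hd'⟩ := exists_setDist_eq H u hne
    have hw'A : Sum.inr (i, w') ∈ A := hw'
    refine (setDist_le _ hw'A).trans ?_
    obtain h0 | h1 : H.dist u w' = 0 ∨ H.dist u w' = 1 := by omega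
    · rw [hH.dist_eq_zero_iff] at h0
      simp [h0]
    · rw [SimpleGraph.dist_eq_one_iff_adj] at h1
      exact (SimpleGraph.dist_eq_one_iff_adj.2 (corona_adj_inr_inr.2 h1)).le
  · exact (setDist_le _ hy).trans ((dist_copy_le_two hG i u w).trans h2)

/-- The nonempty traces, on one copy of `H`, of the cells of a resolving partition of `G ⊙ H` form a
resolving partition of `H`. Empty traces are discarded because cells must be nonempty. -/
lemma isResolvingPartition_trace (hG : G.Connected) (hH : H.Connected) (i : V)
    {P : Set (Set (V ⊕ V × W))} (hP : IsResolvingPartition (corona G H) P) :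
    IsResolvingPartition H {T | T.Nonempty ∧ T ∈ copyTrace i '' P} := by
  obtain ⟨hne, hpart, hres⟩ := hP
  refine ⟨fun T hT => hT.1, fun v => ?_, fun u v huv => ?_⟩
  · obtain ⟨A, ⟨hA, hvA⟩, huniq⟩ := hpart (Sum.inr (i, v))
    refine ⟨copyTrace i A, ⟨⟨⟨v, hvA⟩, A, hA, rfl⟩, hvA⟩, ?_⟩
    rintro _ ⟨⟨-, B, hB, rfl⟩, hvB⟩
    rw [huniq B ⟨hB, hvB⟩]
  · have key : (Sum.inr (i, u) : V ⊕ V × W) = Sum.inr (i, v) := by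
      refine hres _ _ fun A hA => le_antisymm ?_ ?_
      · exact setDist_corona_le hG hH (hne A hA) fun h => huv _ ⟨h, A, hA, rfl⟩
      · exact setDist_corona_le hG hH (hne A hA) fun h => (huv _ ⟨h, A, hA, rfl⟩).symm
    simpa using key

lemma isResolvingPartition_singletons {α : Type*} {K : SimpleGraph α} (hK : K.Connected) :
    IsResolvingPartition K (Set.range fun v : α => ({v} : Set α)) := by
  refine ⟨?_, fun v => ⟨{v}, ⟨⟨v, rfl⟩, rfl⟩, ?_⟩, fun u v h => ?_⟩
  · rintro _ ⟨v, rfl⟩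
    exact Set.singleton_nonempty v
  · rintro _ ⟨⟨w, rfl⟩, hw⟩
    rw [Set.mem_singleton_iff.1 hw]
  · have h1 := h {v} ⟨v, rfl⟩
    rwa [(mem_iff_setDist_eq_zero hK (Set.singleton_nonempty v)).1 rfl,
      ← mem_iff_setDist_eq_zero hK (Set.singleton_nonempty v)] at h1

end Corona

/-- For any connected graphs `G` and `H`, `pd(G⊙H) ≥ pd(H)`. -/
theorem stmt6 {V W : Type*} [Fintype V] [Fintype W] (G : SimpleGraph V) (H : SimpleGraph W)
    (hG : G.Connected) (hH : H.Connected) :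
    partitionDim (corona G H) ≥ partitionDim H := by
  obtain ⟨i⟩ := hG.nonempty
  obtain ⟨P, hP, hcard⟩ : ∃ P, IsResolvingPartition (corona G H) P ∧
      P.ncard = partitionDim (corona G H) :=
    Nat.sInf_mem (s := {t | ∃ P, IsResolvingPartition (corona G H) P ∧ P.ncard = t})
      ⟨_, _, isResolvingPartition_singletons (corona_connected hG), rfl⟩
  calc partitionDim H ≤ Set.ncard {T | T.Nonempty ∧ T ∈ copyTrace i '' P} :=
        Nat.sInf_le ⟨_, isResolvingPartition_trace hG hH i hP, rfl⟩
    _ ≤ (copyTrace i '' P).ncard := Set.ncard_le_ncard (fun _ h => h.2) (Set.toFinite _)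
    _ ≤ P.ncard := Set.ncard_image_le (Set.toFinite _)
    _ = partitionDim (corona G H) := hcard
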